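/- Let S be a separable and left reversible semitopological semigroup and K a weakly compact convex subset of a Banach space. Then every separately weakly continuous nonexpansive action of S on K has a common fixed point. -/

import Mathlib

/-- A (nonempty) right ideal of a semigroup `S`: `I ≠ ∅` and `I * S ⊆ I`. -/
def IsRightIdeal {S : Type*} [Semigroup S] (I : Set S) : Prop :=
  I.Nonempty ∧ ∀ i ∈ I, ∀ s : S, i * s ∈ I

/-- `S` is left reversible: any two closed right ideals of `S` intersect. -/
def LeftReversible (S : Type*) [Semigroup S] [TopologicalSpace S] : Prop :=
  ∀ I J : Set S, IsRightIdeal I → IsRightIdeal J → IsClosed I → IsClosed J → (I ∩ J).Nonempty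

/-!
A closed set `M ⊆ K` with `M ⊆ s • M` for all `s` is *backward invariant*.

Left reversibility makes the images `s • Y` of a closed invariant set `Y` downward directed, so
by weak compactness `⋂ s, s • Y` is backward invariant. Let `Y` be a weak orbit closure: it is norm
separable, since norm closed linear spans are weakly closed. In a minimal weakly closed backward
invariant `M ⊆ Y`, the points near which `M` cannot be covered by finitely many `ε`-balls again form
a weakly closed backward invariant set (limits of ultrafilters lift along nonexpansive maps). By
Baire category this set is not all of `M`, hence it is empty, and `M` is norm totally bounded.

Now choose `M` inside a minimal weakly closed convex invariant set `C` and suppose that `M` has two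
points. Total boundedness gives `u ∈ C` and `r < diam M` with `M ⊆ closedBall u r`. The points of
`C` whose distance to all of `M` is at most `r` form a smaller convex invariant set (backward
invariance of `M` is what makes it invariant), a contradiction. So `M` is a point, and it is fixed.
-/

open Set Filter Topology TopologicalSpace Metric
open scoped Pointwise

section Compactness

variable {X Z ι : Type*} [TopologicalSpace X]

lemma image_iInter_of_directed_isCompact [TopologicalSpace Z] [T1Space Z] [Nonempty ι]
    {A : ι → Set X} (hd : Directed (· ⊇ ·) A) (hc : ∀ i, IsCompact (A i))
    (hcl : ∀ i, IsClosed (A i)) {f : X → Z} (hf : Continuous f) :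
    f '' ⋂ i, A i = ⋂ i, f '' A i := by
  refine Subset.antisymm (image_iInter_subset A f) fun z hz ↦ ?_
  have hfib : IsClosed (f ⁻¹' {z}) := isClosed_singleton.preimage hf
  obtain ⟨x, hx⟩ := IsCompact.nonempty_iInter_of_directed_nonempty_isCompact_isClosed
    (fun i ↦ A i ∩ f ⁻¹' {z})
    (fun i j ↦ (hd i j).imp fun _ h ↦
      ⟨inter_subset_inter_left _ h.1, inter_subset_inter_left _ h.2⟩)
    (fun i ↦ mem_iInter.1 hz i) (fun i ↦ (hc i).inter_right hfib) (fun i ↦ (hcl i).inter hfib)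
  rw [← iInter_inter] at hx
  exact ⟨x, hx⟩

lemma exists_minimal_isClosed_nonempty [CompactSpace X] {P : Set X → Prop}
    (hP : ∀ c : Set (Set X), c.Nonempty → IsChain (· ⊆ ·) c →
      (∀ A ∈ c, IsClosed A ∧ P A) → P (⋂₀ c))
    {A : Set X} (hA : IsClosed A) (hne : A.Nonempty) (hPA : P A) :
    ∃ M ⊆ A, Minimal (fun B ↦ IsClosed B ∧ B.Nonempty ∧ P B) M := by
  refine zorn_superset_nonempty {B | IsClosed B ∧ B.Nonempty ∧ P B}
    (fun c hc hchain hcne ↦ ⟨⋂₀ c, ⟨isClosed_sInter fun B hB ↦ (hc hB).1, ?_, ?_⟩,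
      fun B hB ↦ sInter_subset_of_mem hB⟩) A ⟨hA, hne, hPA⟩
  · have : Nonempty c := hcne.to_subtype
    exact IsCompact.nonempty_sInter_of_directed_nonempty_isCompact_isClosed
      (fun B hB C hC ↦ (hchain.total hB hC).elim
        (fun h ↦ ⟨B, hB, Subset.rfl, h⟩) fun h ↦ ⟨C, hC, h, Subset.rfl⟩)
      (fun B hB ↦ (hc hB).2.1)
      (fun B hB ↦ (hc hB).1.isCompact) fun B hB ↦ (hc hB).1
  · exact hP c hcne hchain fun B hB ↦ ⟨(hc hB).1, (hc hB).2.2⟩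

end Compactness

section EscapeLocus

variable {X E : Type*} [PseudoMetricSpace E] {φ : X → E} {ε : ℝ} {A : Set X}

/-- The filter on `X` generated by the complements of the balls `{x | dist (φ x) (φ c) ≤ ε}`. It is
disjoint from `𝓟 A` exactly when finitely many of these balls cover `A`. -/
def escapeFilter (φ : X → E) (ε : ℝ) : Filter X := ⨅ c, 𝓟 {x | ε < dist (φ x) (φ c)}

lemma le_escapeFilter_iff {F : Filter X} :
    F ≤ escapeFilter φ ε ↔ ∀ c, ∀ᶠ x in F, ε < dist (φ x) (φ c) := by
  simp only [escapeFilter, le_iInf_iff, le_principal_iff, Filter.Eventually]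

lemma totallyBounded_image_of_forall_disjoint_escapeFilter
    (h : ∀ ε > 0, Disjoint (𝓟 A) (escapeFilter φ ε)) : TotallyBounded (φ '' A) := by
  refine totallyBounded_iff_ultrafilter.2 fun G hG ↦ Metric.cauchy_iff.2 ⟨G.neBot, fun ε hε ↦ ?_⟩
  have hAG : φ '' A ∈ G := le_principal_iff.1 hG
  let U := Ultrafilter.ofComapInfPrincipal hAG
  have hAU : (U : Filter X) ≤ 𝓟 A := le_principal_iff.2 (Ultrafilter.ofComapInfPrincipal_mem hAG)
  have hUG : U.map φ = G := Ultrafilter.ofComapInfPrincipal_eq_of_map hAG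
  have hfar : ¬ (U : Filter X) ≤ escapeFilter φ (ε / 3) := fun hle ↦
    U.neBot.ne (le_bot_iff.1 (h (ε / 3) (by positivity) hAU hle))
  simp only [le_escapeFilter_iff, not_forall, ← U.eventually_not, not_lt] at hfar
  obtain ⟨c, hc⟩ := hfar
  have hball : closedBall (φ c) (ε / 3) ∈ G := hUG ▸ Ultrafilter.mem_map.2 hc
  refine ⟨_, hball, fun x hx y hy ↦ ?_⟩
  linarith [dist_triangle_right x y (φ c), mem_closedBall.1 hx, mem_closedBall.1 hy]

variable [TopologicalSpace X]

/-- The points near which `A` cannot be covered by finitely many `φ`-balls of radius `ε`. -/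
def escapeLocus (φ : X → E) (ε : ℝ) (A : Set X) : Set X :=
  {x | ClusterPt x (𝓟 A ⊓ escapeFilter φ ε)}

lemma isClosed_escapeLocus : IsClosed (escapeLocus φ ε A) := isClosed_setOfPred_clusterPt

lemma escapeLocus_subset (hA : IsClosed A) : escapeLocus φ ε A ⊆ A := fun _ hx ↦
  hA.closure_subset (mem_closure_iff_clusterPt.2 (hx.mono inf_le_left))

lemma disjoint_escapeFilter_of_escapeLocus_eq_empty (hA : IsCompact A)
    (h : escapeLocus φ ε A = ∅) : Disjoint (𝓟 A) (escapeFilter φ ε) := by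
  rw [disjoint_iff, ← not_neBot]
  intro hne
  obtain ⟨x, -, hx⟩ := hA (f := 𝓟 A ⊓ escapeFilter φ ε) inf_le_left
  exact h.subset hx

lemma escapeLocus_subset_image [T2Space X] {f : X → X} (hf : Continuous f)
    (hφf : ∀ x y, dist (φ (f x)) (φ (f y)) ≤ dist (φ x) (φ y)) (hA : IsCompact A)
    (hAf : A ⊆ f '' A) : escapeLocus φ ε A ⊆ f '' escapeLocus φ ε A := by
  intro y hy
  obtain ⟨U, hU, hUy⟩ := clusterPt_iff_ultrafilter.1 hy
  rw [le_inf_iff, le_principal_iff, le_escapeFilter_iff] at hU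
  have hAU : f '' A ∈ U := mem_of_superset hU.1 hAf
  let V := Ultrafilter.ofComapInfPrincipal hAU
  have hAV : A ∈ V := Ultrafilter.ofComapInfPrincipal_mem hAU
  have hVU : Tendsto f V U :=
    (congrArg Ultrafilter.toFilter (Ultrafilter.ofComapInfPrincipal_eq_of_map hAU)).le
  obtain ⟨x, -, hVx⟩ := hA.ultrafilter_le_nhds V (le_principal_iff.2 hAV)
  have hVfar : (V : Filter X) ≤ escapeFilter φ ε := le_escapeFilter_iff.2 fun c ↦
    (hVU.eventually (hU.2 (f c))).mono fun x hx ↦ hx.trans_le (hφf x c)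
  exact ⟨x, clusterPt_iff_ultrafilter.2 ⟨V, le_inf (le_principal_iff.2 hAV) hVfar, hVx⟩,
    tendsto_nhds_unique ((hf.tendsto x).mono_left hVx) (hVU.mono_right hUy)⟩

lemma exists_mem_notMem_escapeLocus [R1Space X] (hball : ∀ e r, IsClosed (φ ⁻¹' closedBall e r))
    (hA : IsCompact A) (hne : A.Nonempty) (hsep : IsSeparable (φ '' A)) (hε : 0 < ε) :
    ∃ x ∈ A, x ∉ escapeLocus φ ε A := by
  obtain ⟨c, hc, hAc⟩ := hsep
  have : CompactSpace A := isCompact_iff_compactSpace.1 hA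
  have : Nonempty A := hne.to_subtype
  have : Countable c := hc.to_subtype
  obtain ⟨e, x, hx⟩ := nonempty_interior_of_iUnion_of_closed
    (f := fun e : c ↦ ((↑) : A → X) ⁻¹' (φ ⁻¹' closedBall (e : E) (ε / 2)))
    (fun e ↦ (hball _ _).preimage continuous_subtype_val)
    (eq_univ_of_forall fun x ↦ by
      obtain ⟨e, he, hxe⟩ := Metric.mem_closure_iff.1 (hAc ⟨x, x.2, rfl⟩) (ε / 2) (half_pos hε)
      exact mem_iUnion.2 ⟨⟨e, he⟩, hxe.le⟩)
  refine ⟨x, x.2, fun hcl ↦ ?_⟩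
  have hnear : φ ⁻¹' closedBall (e : E) (ε / 2) ∈ 𝓝[A] (x : X) :=
    preimage_coe_mem_nhds_subtype.1 (mem_interior_iff_mem_nhds.1 hx)
  obtain ⟨U, hU, hUx⟩ := clusterPt_iff_ultrafilter.1 hcl
  rw [le_inf_iff, le_escapeFilter_iff] at hU
  obtain ⟨z, hz, hzx⟩ := (le_inf hUx hU.1 hnear |> (U.eventually_and.2 ⟨·, hU.2 x⟩)).exists
  have hx' : (x : X) ∈ φ ⁻¹' closedBall (e : E) (ε / 2) := mem_of_mem_nhdsWithin x.2 hnear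
  linarith [dist_triangle_right (φ z) (φ x) e, mem_closedBall.1 hz, mem_closedBall.1 hx']

end EscapeLocus

section BackwardInvariance

variable {S X E ι : Type*}

/-- A set is backward invariant under `S` if each of its points has, for every `s : S`, a preimage
under `s` in the set. -/
def IsBackwardInvariant (S : Type*) [SMul S X] (A : Set X) : Prop := ∀ s : S, A ⊆ s • A

variable [TopologicalSpace X] [CompactSpace X]

lemma IsBackwardInvariant.iInter_of_directed [T1Space X] [SMul S X] [ContinuousConstSMul S X]
    [Nonempty ι] {A : ι → Set X} (hd : Directed (· ⊇ ·) A) (hcl : ∀ i, IsClosed (A i))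
    (hA : ∀ i, IsBackwardInvariant S (A i)) : IsBackwardInvariant S (⋂ i, A i) := fun s ↦
  calc ⋂ i, A i ⊆ ⋂ i, s • A i := iInter_mono fun i ↦ hA i s
    _ = s • ⋂ i, A i := (image_iInter_of_directed_isCompact hd (fun i ↦ (hcl i).isCompact) hcl
      (continuous_const_smul s)).symm

lemma IsBackwardInvariant.exists_minimal [T1Space X] [SMul S X] [ContinuousConstSMul S X]
    {A : Set X} (hA : IsBackwardInvariant S A) (hcl : IsClosed A) (hne : A.Nonempty) :
    ∃ M ⊆ A, Minimal (fun B ↦ IsClosed B ∧ B.Nonempty ∧ IsBackwardInvariant S B) M := by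
  refine exists_minimal_isClosed_nonempty (fun c hcne hchain hc ↦ ?_) hcl hne hA
  have : Nonempty c := hcne.to_subtype
  rw [sInter_eq_iInter]
  exact .iInter_of_directed
    (fun B C ↦ (hchain.total B.2 C.2).elim
      (fun h ↦ ⟨B, Subset.rfl, h⟩) fun h ↦ ⟨C, h, Subset.rfl⟩)
    (fun B ↦ (hc B B.2).1) fun B ↦ (hc B B.2).2

lemma totallyBounded_image_of_minimal_isBackwardInvariant [T2Space X] [SMul S X]
    [ContinuousConstSMul S X] [PseudoMetricSpace E] {φ : X → E}
    (hball : ∀ e r, IsClosed (φ ⁻¹' closedBall e r))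
    (hφ : ∀ (s : S) x y, dist (φ (s • x)) (φ (s • y)) ≤ dist (φ x) (φ y)) {M : Set X}
    (hM : Minimal (fun B ↦ IsClosed B ∧ B.Nonempty ∧ IsBackwardInvariant S B) M)
    (hsep : IsSeparable (φ '' M)) : TotallyBounded (φ '' M) := by
  obtain ⟨hcl, hne, hback⟩ := hM.prop
  refine totallyBounded_image_of_forall_disjoint_escapeFilter fun ε hε ↦
    disjoint_escapeFilter_of_escapeLocus_eq_empty hcl.isCompact ?_
  by_contra hlocus
  have hlocus_back : IsBackwardInvariant S (escapeLocus φ ε M) := fun s ↦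
    escapeLocus_subset_image (continuous_const_smul s) (hφ s) hcl.isCompact (hback s)
  have hMlocus : M ⊆ escapeLocus φ ε M := hM.le_of_le
    ⟨isClosed_escapeLocus, nonempty_iff_ne_empty.2 hlocus, hlocus_back⟩ (escapeLocus_subset hcl)
  obtain ⟨x, hxM, hx⟩ := exists_mem_notMem_escapeLocus hball hcl.isCompact hne hsep hε
  exact hx (hMlocus hxM)

section LeftReversible

variable [Semigroup S] [TopologicalSpace S]

lemma isRightIdeal_closure_range_mul (hmulR : ∀ t : S, Continuous fun s ↦ s * t) (a : S) :
    IsRightIdeal (closure (range (a * ·))) := by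
  have : Nonempty S := ⟨a⟩
  refine ⟨(range_nonempty _).closure, fun i hi s ↦ map_mem_closure (f := (· * s)) (hmulR s) hi ?_⟩
  rintro _ ⟨r, rfl⟩
  exact ⟨r * s, (mul_assoc a r s).symm⟩

variable [T2Space X] [SemigroupAction S X] [ContinuousConstSMul S X] {Y : Set X}

lemma smul_set_subset_of_mem_closure_range_mul (hsmul : ∀ x : X, Continuous fun s : S ↦ s • x)
    (hY : IsClosed Y) (hYS : ∀ s : S, s • Y ⊆ Y) {a c : S} (hc : c ∈ closure (range (a * ·))) :
    c • Y ⊆ a • Y := by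
  rintro _ ⟨y, hy, rfl⟩
  refine (hY.isCompact.smul a).isClosed.closure_subset
    (map_mem_closure (f := (· • y)) (hsmul y) hc ?_)
  rintro _ ⟨r, rfl⟩
  exact ⟨r • y, hYS r (smul_mem_smul_set hy), (mul_smul a r y).symm⟩

lemma LeftReversible.directed_smul_set (hS : LeftReversible S)
    (hmulR : ∀ t : S, Continuous fun s ↦ s * t) (hsmul : ∀ x : X, Continuous fun s : S ↦ s • x)
    (hY : IsClosed Y) (hYS : ∀ s : S, s • Y ⊆ Y) : Directed (· ⊇ ·) fun s : S ↦ s • Y := by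
  intro a b
  obtain ⟨c, hca, hcb⟩ := hS _ _ (isRightIdeal_closure_range_mul hmulR a)
    (isRightIdeal_closure_range_mul hmulR b) isClosed_closure isClosed_closure
  exact ⟨c, smul_set_subset_of_mem_closure_range_mul hsmul hY hYS hca,
    smul_set_subset_of_mem_closure_range_mul hsmul hY hYS hcb⟩

lemma LeftReversible.exists_isBackwardInvariant_subset [Nonempty S] (hS : LeftReversible S)
    (hmulR : ∀ t : S, Continuous fun s ↦ s * t) (hsmul : ∀ x : X, Continuous fun s : S ↦ s • x)
    (hY : IsClosed Y) (hne : Y.Nonempty) (hYS : ∀ s : S, s • Y ⊆ Y) :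
    ∃ F ⊆ Y, IsClosed F ∧ F.Nonempty ∧ IsBackwardInvariant S F := by
  have hcpt (s : S) : IsCompact (s • Y) := hY.isCompact.smul s
  have hcl (s : S) : IsClosed (s • Y) := (hcpt s).isClosed
  have hmul (t s : S) : (t * s) • Y = t • s • Y := by
    simp only [← image_smul, image_image, mul_smul]
  have hd := hS.directed_smul_set hmulR hsmul hY hYS
  obtain ⟨s₀⟩ := ‹Nonempty S›
  refine ⟨⋂ s : S, s • Y, (iInter_subset _ s₀).trans (hYS s₀), isClosed_iInter hcl,
    IsCompact.nonempty_iInter_of_directed_nonempty_isCompact_isClosed _ hd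
      (fun s ↦ hne.smul_set) hcpt hcl, fun t ↦ ?_⟩
  calc ⋂ s : S, s • Y ⊆ ⋂ s : S, t • s • Y := subset_iInter fun s ↦
        (iInter_subset _ (t * s)).trans (hmul t s).subset
    _ = t • ⋂ s : S, s • Y :=
      (image_iInter_of_directed_isCompact hd hcpt hcl (continuous_const_smul t)).symm

end LeftReversible

end BackwardInvariance

section WeakTopology

variable {X E : Type*} [TopologicalSpace X] [AddCommGroup E] [Module ℝ E] [TopologicalSpace E]
  [IsTopologicalAddGroup E] [ContinuousSMul ℝ E] [LocallyConvexSpace ℝ E] {φ : X → E}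

lemma isClosed_preimage_of_convex (hφ : Continuous fun x ↦ toWeakSpace ℝ E (φ x)) {B : Set E}
    (hB : Convex ℝ B) (hcl : IsClosed B) : IsClosed (φ ⁻¹' B) := by
  have hweak : IsClosed (toWeakSpace ℝ E '' B) := by
    rw [← hcl.closure_eq, hB.toWeakSpace_closure ℝ]
    exact isClosed_closure
  have hpre : φ ⁻¹' B = (fun x ↦ toWeakSpace ℝ E (φ x)) ⁻¹' (toWeakSpace ℝ E '' B) := by
    ext x
    exact (toWeakSpace ℝ E).injective.mem_set_image.symm
  exact hpre ▸ hweak.preimage hφ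

lemma isSeparable_image_of_continuous_toWeakSpace
    (hφ : Continuous fun x ↦ toWeakSpace ℝ E (φ x)) {A : Set X} (hA : IsSeparable A) :
    IsSeparable (φ '' A) := by
  obtain ⟨c, hc, hAc⟩ := hA
  let L := (Submodule.span ℝ (φ '' c)).topologicalClosure
  have hL : IsSeparable (L : Set E) := (hc.image φ).isSeparable.span.closure
  have hcL : c ⊆ φ ⁻¹' L := fun x hx ↦
    Submodule.le_topologicalClosure _ (Submodule.subset_span (mem_image_of_mem φ hx))
  refine hL.mono (image_subset_iff.2 (hAc.trans (closure_minimal hcL ?_)))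
  exact isClosed_preimage_of_convex hφ L.convex (Submodule.isClosed_topologicalClosure _)

end WeakTopology

section NormalStructure

variable {E : Type*} [NormedAddCommGroup E] [NormedSpace ℝ E]

lemma dist_centerMass_one_le {t : Finset E} {x y : E} {d δ : ℝ} (hx : x ∈ t)
    (hd : ∀ i ∈ t, dist i y ≤ d) (hδ : dist x y ≤ δ) :
    dist (t.centerMass (fun _ ↦ (1 : ℝ)) id) y ≤ d - (d - δ) / t.card := by
  classical
  have hcard : (0 : ℝ) < t.card := by exact_mod_cast Finset.card_pos.2 ⟨x, hx⟩
  have herase : ∑ i ∈ t.erase x, dist i y ≤ (t.card - 1) * d := by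
    have := Finset.sum_le_card_nsmul _ _ d fun i hi ↦ hd i (Finset.mem_of_mem_erase (a := x) hi)
    rwa [Finset.card_erase_of_mem hx, nsmul_eq_mul, Nat.cast_pred (Finset.card_pos.2 ⟨x, hx⟩)]
      at this
  calc dist (t.centerMass (fun _ ↦ (1 : ℝ)) id) y
      ≤ t.centerMass (fun _ ↦ (1 : ℝ)) fun i ↦ dist i y :=
        (convexOn_dist y convex_univ).map_centerMass_le (by simp) (by simpa using hcard) (by simp)
    _ = (∑ i ∈ t, dist i y) / t.card := by
        simp [Finset.centerMass, div_eq_inv_mul]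
    _ ≤ ((t.card - 1) * d + δ) / t.card := by
        rw [← Finset.sum_erase_add t _ hx]
        gcongr
    _ = d - (d - δ) / t.card := by field_simp; ring

lemma exists_mem_convexHull_subset_closedBall_of_totallyBounded {A : Set E}
    (hA : TotallyBounded A) (hne : A.Nontrivial) :
    ∃ u ∈ convexHull ℝ A, ∃ r < diam A, A ⊆ closedBall u r := by
  have hdiam : 0 < diam A := diam_pos hne hA.isBounded
  obtain ⟨t, htA, htf, hAt⟩ := finite_approx_of_totallyBounded hA (diam A / 2) (half_pos hdiam)
  lift t to Finset E using htf
  obtain ⟨a, ha⟩ := hne.nonempty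
  obtain ⟨i, hi, -⟩ := mem_iUnion₂.1 (hAt ha)
  have hcard : (0 : ℝ) < t.card := by exact_mod_cast Finset.card_pos.2 ⟨i, hi⟩
  refine ⟨t.centerMass (fun _ ↦ (1 : ℝ)) id,
    t.centerMass_mem_convexHull (by simp) (by simpa using hcard) fun i hi ↦ htA hi,
    diam A - (diam A - diam A / 2) / t.card, ?_, fun y hy ↦ ?_⟩
  · have : 0 < (diam A - diam A / 2) / t.card := by rw [sub_half]; positivity
    linarith
  · obtain ⟨x, hx, hyx⟩ := mem_iUnion₂.1 (hAt hy)
    rw [mem_closedBall']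
    exact dist_centerMass_one_le hx
      (fun i hi ↦ dist_le_diam_of_mem hA.isBounded (htA hi) hy) (mem_ball'.1 hyx).le

end NormalStructure

section FixedPoint

variable {S X E : Type*} [TopologicalSpace X] [NormedAddCommGroup E]
  [NormedSpace ℝ E] {φ : X → E}

lemma exists_minimal_convex_smul_invariant [CompactSpace X] [SMul S X] [Nonempty X]
    (hinj : Function.Injective φ) (hconv : Convex ℝ (range φ)) :
    ∃ C : Set X, Minimal
      (fun C ↦ IsClosed C ∧ C.Nonempty ∧ Convex ℝ (φ '' C) ∧ ∀ s : S, s • C ⊆ C) C := by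
  refine (exists_minimal_isClosed_nonempty
    (P := fun C : Set X ↦ Convex ℝ (φ '' C) ∧ ∀ s : S, s • C ⊆ C)
    (fun c hcne _ hc ↦ ⟨?_, fun s ↦ subset_sInter fun B hB ↦
      (smul_set_mono (sInter_subset_of_mem hB)).trans ((hc B hB).2.2 s)⟩)
    isClosed_univ univ_nonempty ⟨by rwa [image_univ], fun s ↦ subset_univ _⟩).imp
    fun _ ↦ And.right
  have : Nonempty c := hcne.to_subtype
  rw [sInter_eq_iInter, hinj.injOn.image_iInter_eq]
  exact convex_iInter fun B ↦ (hc B B.2).2.1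

lemma subsingleton_image_of_minimal_convex_of_isBackwardInvariant [SMul S X]
    (hweak : Continuous fun x ↦ toWeakSpace ℝ E (φ x))
    (hφ : ∀ (s : S) x y, dist (φ (s • x)) (φ (s • y)) ≤ dist (φ x) (φ y)) {C M : Set X}
    (hC : Minimal (fun C ↦ IsClosed C ∧ C.Nonempty ∧ Convex ℝ (φ '' C) ∧ ∀ s : S, s • C ⊆ C) C)
    (hMC : M ⊆ C) (hM : IsBackwardInvariant S M) (htb : TotallyBounded (φ '' M)) :
    (φ '' M).Subsingleton := by
  by_contra hnontriv
  rw [not_subsingleton_iff] at hnontriv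
  obtain ⟨hcl, -, hconv, hinv⟩ := hC.prop
  obtain ⟨u, hu, r, hr, hMr⟩ :=
    exists_mem_convexHull_subset_closedBall_of_totallyBounded htb hnontriv
  let B := ⋂ m ∈ M, closedBall (φ m) r
  have hBconv : Convex ℝ B := convex_iInter₂ fun m _ ↦ convex_closedBall (φ m) r
  have hBcl : IsClosed B := isClosed_biInter fun m _ ↦ isClosed_closedBall
  have hne : (C ∩ φ ⁻¹' B).Nonempty := by
    obtain ⟨v, hv, rfl⟩ := convexHull_min (image_mono hMC) hconv hu
    exact ⟨v, hv, mem_iInter₂.2 fun m hm ↦ mem_closedBall_comm.1 (hMr (mem_image_of_mem φ hm))⟩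
  have hinvB (s : S) : s • (C ∩ φ ⁻¹' B) ⊆ C ∩ φ ⁻¹' B := by
    rintro _ ⟨z, ⟨hzC, hzB⟩, rfl⟩
    refine ⟨hinv s (smul_mem_smul_set hzC), mem_iInter₂.2 fun m hm ↦ ?_⟩
    obtain ⟨m', hm', rfl⟩ := hM s hm
    exact (hφ s z m').trans (mem_iInter₂.1 hzB m' hm')
  have hCB : C ⊆ C ∩ φ ⁻¹' B := hC.le_of_le
    ⟨hcl.inter (isClosed_preimage_of_convex hweak hBconv hBcl), hne,
      image_inter_preimage φ C B ▸ hconv.inter hBconv, hinvB⟩ inter_subset_left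
  have hdist : ∀ x ∈ φ '' M, ∀ y ∈ φ '' M, dist x y ≤ r :=
    forall_mem_image.2 fun x hx ↦ forall_mem_image.2 fun y hy ↦
      mem_iInter₂.1 (hCB (hMC hx)).2 y hy
  obtain ⟨m, hm⟩ := hnontriv.nonempty
  exact hr.not_ge (diam_le_of_forall_dist_le (dist_nonneg.trans (hdist m hm m hm)) hdist)

variable [CompactSpace X] [Semigroup S] [TopologicalSpace S] [SeparableSpace S]
  [SemigroupAction S X] [ContinuousConstSMul S X]

lemma LeftReversible.exists_isBackwardInvariant_totallyBounded [T2Space X] [Nonempty S]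
    (hS : LeftReversible S) (hmulR : ∀ t : S, Continuous fun s ↦ s * t)
    (hsmul : ∀ x : X, Continuous fun s : S ↦ s • x)
    (hweak : Continuous fun x ↦ toWeakSpace ℝ E (φ x))
    (hφ : ∀ (s : S) x y, dist (φ (s • x)) (φ (s • y)) ≤ dist (φ x) (φ y)) {C : Set X}
    (hcl : IsClosed C) (hne : C.Nonempty) (hinv : ∀ s : S, s • C ⊆ C) :
    ∃ M ⊆ C, M.Nonempty ∧ IsBackwardInvariant S M ∧ TotallyBounded (φ '' M) := by
  obtain ⟨x, hx⟩ := hne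
  let Y : Set X := closure (range fun s : S ↦ s • x)
  have hYC : Y ⊆ C :=
    closure_minimal (range_subset_iff.2 fun s ↦ hinv s (smul_mem_smul_set hx)) hcl
  have hYinv (s : S) : s • Y ⊆ Y := by
    rintro _ ⟨y, hy, rfl⟩
    refine map_mem_closure (continuous_const_smul s) hy ?_
    rintro _ ⟨t, rfl⟩
    exact ⟨s * t, mul_smul s t x⟩
  have hYsep : IsSeparable (φ '' Y) :=
    isSeparable_image_of_continuous_toWeakSpace hweak (isSeparable_range (hsmul x)).closure
  obtain ⟨F, hFY, hFcl, hFne, hF⟩ := hS.exists_isBackwardInvariant_subset hmulR hsmul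
    isClosed_closure (range_nonempty _).closure hYinv
  obtain ⟨M, hMF, hM⟩ := hF.exists_minimal hFcl hFne
  exact ⟨M, hMF.trans (hFY.trans hYC), hM.prop.2.1, hM.prop.2.2,
    totallyBounded_image_of_minimal_isBackwardInvariant
      (fun e r ↦ isClosed_preimage_of_convex hweak (convex_closedBall e r) isClosed_closedBall)
      hφ hM (hYsep.mono (image_mono (hMF.trans hFY)))⟩

theorem LeftReversible.exists_forall_smul_eq [Nonempty X]
    (hS : LeftReversible S) (hmulR : ∀ t : S, Continuous fun s ↦ s * t)
    (hsmul : ∀ x : X, Continuous fun s : S ↦ s • x)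
    (hweak : Continuous fun x ↦ toWeakSpace ℝ E (φ x)) (hinj : Function.Injective φ)
    (hconv : Convex ℝ (range φ))
    (hφ : ∀ (s : S) x y, dist (φ (s • x)) (φ (s • y)) ≤ dist (φ x) (φ y)) :
    ∃ x : X, ∀ s : S, s • x = x := by
  have : T2Space X := .of_injective_continuous ((toWeakSpace ℝ E).injective.comp hinj) hweak
  cases isEmpty_or_nonempty S
  · exact ⟨Classical.arbitrary X, isEmptyElim⟩
  obtain ⟨C, hC⟩ := exists_minimal_convex_smul_invariant (S := S) hinj hconv
  obtain ⟨M, hMC, ⟨m, hm⟩, hM, htb⟩ := hS.exists_isBackwardInvariant_totallyBounded hmulR hsmul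
    hweak hφ hC.prop.1 hC.prop.2.1 hC.prop.2.2.2
  have hsub := subsingleton_image_of_minimal_convex_of_isBackwardInvariant hweak hφ hC hMC hM htb
  refine ⟨m, fun s ↦ ?_⟩
  obtain ⟨m', hm', hsm'⟩ := hM s hm
  obtain rfl : m' = m := hinj (hsub (mem_image_of_mem φ hm') (mem_image_of_mem φ hm))
  exact hsm'

end FixedPoint

theorem common_fixed_point_separable_leftReversible_nonexpansive_general
    {S E : Type*} [Semigroup S] [TopologicalSpace S] [SeparableSpace S]
    [NormedAddCommGroup E] [NormedSpace ℝ E]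
    (hmulR : ∀ t : S, Continuous fun s ↦ s * t) (hlrev : LeftReversible S)
    {K : Set E} (hKne : K.Nonempty) (hKconv : Convex ℝ K)
    (hKcomp : IsCompact (toWeakSpace ℝ E '' K))
    {act : S → E → E} (hmaps : ∀ s : S, MapsTo (act s) K K)
    (haction : ∀ s t : S, ∀ x ∈ K, act (s * t) x = act s (act t x))
    (hcontS : ∀ x ∈ K, Continuous fun s : S ↦ toWeakSpace ℝ E (act s x))
    (hcontK : ∀ s : S, ContinuousOn
      (fun x : WeakSpace ℝ E ↦ toWeakSpace ℝ E (act s ((toWeakSpace ℝ E).symm x)))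
      (toWeakSpace ℝ E '' K))
    (hne : ∀ s : S, ∀ x ∈ K, ∀ y ∈ K, ‖act s x - act s y‖ ≤ ‖x - y‖) :
    ∃ x₀ ∈ K, ∀ s : S, act s x₀ = x₀ := by
  let X := toWeakSpace ℝ E '' K
  let φ (x : X) : E := (toWeakSpace ℝ E).symm x
  have hφK (x : X) : φ x ∈ K := by
    obtain ⟨_, y, hy, rfl⟩ := x
    exact hy
  have hrange : range φ = K :=
    (range_subset_iff.2 hφK).antisymm fun y hy ↦ ⟨⟨_, mem_image_of_mem _ hy⟩, rfl⟩
  let : SemigroupAction S X :=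
    { smul s x := ⟨toWeakSpace ℝ E (act s (φ x)), mem_image_of_mem _ (hmaps s (hφK x))⟩
      mul_smul s t x := Subtype.ext (congrArg (toWeakSpace ℝ E) (haction s t _ (hφK x))) }
  have : ContinuousConstSMul S X := ⟨fun s ↦ (hcontK s).domRestrict.subtype_mk _⟩
  have : CompactSpace X := isCompact_iff_compactSpace.1 hKcomp
  have : Nonempty X := (hKne.image _).to_subtype
  obtain ⟨x, hx⟩ := hlrev.exists_forall_smul_eq (X := X) (φ := φ) hmulR
    (fun x ↦ (hcontS _ (hφK x)).subtype_mk _) continuous_subtype_val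
    ((toWeakSpace ℝ E).symm.injective.comp Subtype.val_injective) (hrange ▸ hKconv)
    fun s x y ↦ by
      rw [dist_eq_norm, dist_eq_norm]
      exact hne s _ (hφK x) _ (hφK y)
  exact ⟨φ x, hφK x, fun s ↦ congrArg φ (hx s)⟩

/-- let `S` be a separable and left reversible semitopological semigroup
and `K` a nonempty weakly compact convex subset of a Banach space.  Every separately
weakly continuous nonexpansive action of `S` on `K` has a common fixed point. -/
theorem common_fixed_point_separable_leftReversible_nonexpansive
    {S E : Type*} [Semigroup S] [TopologicalSpace S] [T2Space S]
    [TopologicalSpace.SeparableSpace S]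
    [NormedAddCommGroup E] [NormedSpace ℝ E] [CompleteSpace E]
    -- `S` is a semitopological semigroup: multiplication is separately continuous
    (hmulL : ∀ t : S, Continuous fun s => t * s)
    (hmulR : ∀ t : S, Continuous fun s => s * t)
    (hlrev : LeftReversible S)
    (K : Set E) (hKne : K.Nonempty) (hKconv : Convex ℝ K)
    (hKcomp : IsCompact (toWeakSpace ℝ E '' K))
    (act : S → E → E) (hmaps : ∀ s : S, Set.MapsTo (act s) K K)
    (haction : ∀ s t : S, ∀ x ∈ K, act (s * t) x = act s (act t x))
    -- the action is separately weakly continuous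
    (hcontS : ∀ x ∈ K, Continuous fun s : S => toWeakSpace ℝ E (act s x))
    (hcontK : ∀ s : S, ContinuousOn
      (fun x : WeakSpace ℝ E => toWeakSpace ℝ E (act s ((toWeakSpace ℝ E).symm x)))
      (toWeakSpace ℝ E '' K))
    -- the action is nonexpansive
    (hne : ∀ s : S, ∀ x ∈ K, ∀ y ∈ K, ‖act s x - act s y‖ ≤ ‖x - y‖) :
    ∃ x₀ ∈ K, ∀ s : S, act s x₀ = x₀ :=
  common_fixed_point_separable_leftReversible_nonexpansive_general hmulR hlrev hKne hKconv
    hKcomp hmaps haction hcontS hcontK hne
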